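/- arXiv:2305.12869 — 9 statements merged into one kernel-verified Lean document; each statement's English description precedes it below -/
import Mathlib

section
/- Let A be a commutative Gelfand–Dorfman algebra. Then A satisfies the transposed Poisson identity: 2([x,y]⋅z) = [x⋅z, y] + [x, y⋅z] for all x, y, z ∈ A. -/
/-!
Write `a = [x, y] ⋅ z`, `b = [y, z] ⋅ x`, `c = [z, x] ⋅ y`. The Gelfand–Dorfman identity says
`[x, y ⋅ z] - [z, x ⋅ y] = a + b - c`. Its left-hand sides telescope over the cyclic permutations of
`x, y, z`, so `a + b + c = 0`, and modulo this relation the instance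
`[x, y ⋅ z] - [y, z ⋅ x] = a - b - c` is the transposed Poisson identity.
-/

section GelfandDorfman

variable {R A : Type*} [CommSemiring R] [AddCommGroup A] [Module R A]
  (mul : A →ₗ[R] A →ₗ[R] A) (br : A → A → A)
  (hmul_comm : ∀ x y : A, mul x y = mul y x)
  (hbr_anti : ∀ x y : A, br x y = -br y x)
  (hgd : ∀ x y z : A,
    br x (mul y z) - br z (mul y x) + mul (br y x) z - mul (br y z) x - mul (br x z) y = 0)

include hmul_comm hbr_anti hgd

theorem br_mul_sub_br_mul (x y z : A) :
    br x (mul y z) - br z (mul x y) = mul (br x y) z + mul (br y z) x - mul (br z x) y := by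
  have h := hgd x y z
  rw [hmul_comm y x, hbr_anti y x, hbr_anti x z, LinearMap.map_neg₂, LinearMap.map_neg₂] at h
  linear_combination (norm := abel) h

theorem mul_br_add_mul_br_add_mul_br_eq_zero (x y z : A) :
    mul (br x y) z + mul (br y z) x + mul (br z x) y = 0 := by
  have identity := br_mul_sub_br_mul mul br hmul_comm hbr_anti hgd
  linear_combination (norm := abel) -identity x y z - identity y z x - identity z x y

theorem stmt_1_general (x y z : A) :
    2 • mul (br x y) z = br (mul x z) y + br x (mul y z) := by
  have cyclic_sum := mul_br_add_mul_br_add_mul_br_eq_zero mul br hmul_comm hbr_anti hgd x y z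
  have difference := br_mul_sub_br_mul mul br hmul_comm hbr_anti hgd y z x
  rw [hbr_anti (mul x z) y, hmul_comm x z]
  linear_combination (norm := abel) cyclic_sum + difference

end GelfandDorfman

theorem stmt_1 {K A : Type*} [Field K] [CharZero K] [AddCommGroup A] [Module K A]
    (mul : A →ₗ[K] A →ₗ[K] A) (br : A →ₗ[K] A →ₗ[K] A)
    (hmul_comm : ∀ x y : A, mul x y = mul y x)
    (hmul_assoc : ∀ x y z : A, mul (mul x y) z = mul x (mul y z))
    (hbr_anti : ∀ x y : A, br x y = - br y x)
    (hbr_jacobi : ∀ x y z : A, br (br x y) z + br (br y z) x + br (br z x) y = 0)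
    (hgd : ∀ x y z : A,
      br x (mul y z) - br z (mul y x) + mul (br y x) z - mul (br y z) x - mul (br x z) y = 0) :
    ∀ x y z : A, 2 • mul (br x y) z = br (mul x z) y + br x (mul y z) := by
  exact stmt_1_general mul (br · ·) hmul_comm hbr_anti hgd
end

section
/- Let A be a transposed Poisson algebra. Then A satisfies the commutative Gelfand–Dorfman identity: [x, y⋅z] − [z, y⋅x] + [y,x]⋅z − [y,z]⋅x − [x,z]⋅y = 0 for all x, y, z ∈ A. Hence the variety of commutative Gelfand–Dorfman algebras coincides with the variety of transposed Poisson algebras. -/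
/-!
Put `c x y z = [x, y ⋅ z]`. The compatibility law reads `2 [x, y] ⋅ z = c x y z - c y z x`, so the
doubled products in the Gelfand–Dorfman expression are differences of cyclic rotations of `c`,
which telescope against `2 [x, y ⋅ z] - 2 [z, y ⋅ x] = 2 c x y z - 2 c z x y`.
-/

section TransposedLeibniz

variable {A : Type*} [AddCommGroup A] {mul br : A → A → A}

theorem two_nsmul_mul_bracket (hmul_comm : ∀ x y, mul x y = mul y x)
    (hbr_anti : ∀ x y, br x y = -br y x)
    (htp : ∀ x y z, 2 • mul (br x y) z = br (mul x z) y + br x (mul y z)) (x y z : A) :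
    2 • mul (br x y) z = br x (mul y z) - br y (mul z x) := by
  rw [htp, hbr_anti (mul x z) y, hmul_comm x z, neg_add_eq_sub]

theorem two_nsmul_gelfandDorfman_eq_zero (hmul_comm : ∀ x y, mul x y = mul y x)
    (hbr_anti : ∀ x y, br x y = -br y x)
    (htp : ∀ x y z, 2 • mul (br x y) z = br (mul x z) y + br x (mul y z)) (x y z : A) :
    2 • (br x (mul y z) - br z (mul y x) + mul (br y x) z - mul (br y z) x
      - mul (br x z) y) = 0 := by
  have two_nsmul_mul := two_nsmul_mul_bracket hmul_comm hbr_anti htp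
  simp only [smul_sub, smul_add, two_nsmul_mul]
  rw [hmul_comm x z, hmul_comm x y, hmul_comm z y]
  abel

theorem stmt_2_general (two_regular : IsSMulRegular A (2 : ℕ))
    (hmul_comm : ∀ x y, mul x y = mul y x)
    (hbr_anti : ∀ x y, br x y = -br y x)
    (htp : ∀ x y z, 2 • mul (br x y) z = br (mul x z) y + br x (mul y z)) (x y z : A) :
    br x (mul y z) - br z (mul y x) + mul (br y x) z - mul (br y z) x - mul (br x z) y = 0 :=
  two_regular.right_eq_zero_of_smul
    (two_nsmul_gelfandDorfman_eq_zero hmul_comm hbr_anti htp x y z)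

end TransposedLeibniz

theorem stmt_2 {K A : Type*} [Field K] [CharZero K] [AddCommGroup A] [Module K A]
    (mul : A →ₗ[K] A →ₗ[K] A) (br : A →ₗ[K] A →ₗ[K] A)
    (hmul_comm : ∀ x y : A, mul x y = mul y x)
    (hmul_assoc : ∀ x y z : A, mul (mul x y) z = mul x (mul y z))
    (hbr_anti : ∀ x y : A, br x y = - br y x)
    (hbr_jacobi : ∀ x y z : A, br (br x y) z + br (br y z) x + br (br z x) y = 0)
    (htp : ∀ x y z : A, 2 • mul (br x y) z = br (mul x z) y + br x (mul y z)) :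
    ∀ x y z : A,
      br x (mul y z) - br z (mul y x) + mul (br y x) z - mul (br y z) x - mul (br x z) y = 0 := by
  have : IsAddTorsionFree A := .of_isTorsionFree K A
  exact stmt_2_general (mul := fun x y => mul x y) (br := fun x y => br x y)
    (nsmul_right_injective two_ne_zero) hmul_comm hbr_anti htp
end

section
/- Every transposed Poisson algebra is an F-manifold algebra; that is, for all a₁, a₂, a₃, a₄ in a transposed Poisson algebra A, the identity [a₁⋅a₂, a₃⋅a₄] = [a₁⋅a₂, a₃]⋅a₄ + [a₁⋅a₂, a₄]⋅a₃ + a₁⋅[a₂, a₃⋅a₄] + a₂⋅[a₁, a₃⋅a₄] − (a₁⋅a₃)⋅[a₂,a₄] − (a₂⋅a₃)⋅[a₁,a₄] − (a₂⋅a₄)⋅[a₁,a₃] − (a₁⋅a₄)⋅[a₂,a₃] holds. -/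
/-!
Expanding `2[xz, y]w`, `2[x, yz]w` and `2[x, y](zw)` by the compatibility condition shows that
`2[x, y](zw) = [xz, yw] + [xw, yz]`. Antisymmetry then evaluates the two halves of the
Hertling–Manin expression separately: the four terms in which the bracket contains a product add
up to `3[ab, cd]`, and the four terms `(ac)[b, d]`, ... add up to `2[ab, cd]`.
-/

/-- The compatibility condition between the product and the bracket of a transposed Poisson algebra:
the Leibniz rule with the roles of the two operations exchanged, rescaled by `2`. The bracket is
encoded as a bare binary operation. -/
def IsTransposedLeibniz {A : Type*} [NonUnitalNonAssocRing A] (br : A → A → A) : Prop :=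
  ∀ x y z : A, 2 • (br x y * z) = br (x * z) y + br x (y * z)

namespace IsTransposedLeibniz

section NonUnitalRing

variable {A : Type*} [NonUnitalRing A] {br : A → A → A}

theorem bracket_mul_mul_add_bracket_mul_mul (h : IsTransposedLeibniz br) (x y z w : A) :
    br (x * z) (y * w) + br (x * w) (y * z) = br (x * (z * w)) y + br x (y * (z * w)) := by
  have expand_left := h (x * z) y w
  have expand_right := h x (y * z) w
  have expand_prod := h x y (z * w)
  have expand_first : 2 • (br x y * (z * w)) = br (x * z) y * w + br x (y * z) * w := by
    rw [← mul_assoc, ← smul_mul_assoc, h x y z, add_mul]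
  rw [mul_assoc] at expand_left expand_right
  linear_combination (norm := module)
    2 • expand_prod - 2 • expand_first - expand_left - expand_right

theorem two_nsmul_bracket_mul_mul (h : IsTransposedLeibniz br) (x y z w : A) :
    2 • (br x y * (z * w)) = br (x * z) (y * w) + br (x * w) (y * z) := by
  rw [h x y (z * w), h.bracket_mul_mul_add_bracket_mul_mul]

end NonUnitalRing

section NonUnitalCommRing

variable {A : Type*} [NonUnitalCommRing A] {br : A → A → A}

theorem sum_bracket_mul_eq_three_nsmul (h : IsTransposedLeibniz br)
    (two_regular : IsSMulRegular A (2 : ℕ)) (anti : ∀ x y, br x y = -br y x) (a b c d : A) :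
    br (a * b) c * d + br (a * b) d * c + a * br b (c * d) + b * br a (c * d) =
      3 • br (a * b) (c * d) := by
  have term_c : 2 • (br (a * b) c * d) = br (a * (b * d)) c + br (a * b) (c * d) := by
    rw [h, mul_assoc]
  have term_d : 2 • (br (a * b) d * c) = br (b * (a * c)) d + br (a * b) (c * d) := by
    rw [h, mul_comm a b, mul_assoc, mul_comm d c]
  have term_b : 2 • (a * br b (c * d)) = br (a * b) (c * d) + br b (d * (a * c)) := by
    rw [mul_comm a (br _ _), h, mul_comm b a, mul_comm (c * d) a, ← mul_assoc, mul_comm d (a * c)]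
  have term_a : 2 • (b * br a (c * d)) = br (a * b) (c * d) + br a (c * (b * d)) := by
    rw [mul_comm b (br _ _), h, mul_assoc, mul_comm d b]
  have pair_ac : br (a * (b * d)) c + br a (c * (b * d)) =
      br (a * b) (c * d) + br (a * d) (b * c) := by
    rw [← h.bracket_mul_mul_add_bracket_mul_mul, mul_comm c b]
  have pair_bd : br (b * (a * c)) d + br b (d * (a * c)) =
      br (a * b) (c * d) + br (b * c) (a * d) := by
    rw [← h.bracket_mul_mul_add_bracket_mul_mul, mul_comm b a, mul_comm d c, mul_comm d a]
  apply two_regular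
  linear_combination (norm := module)
    term_c + term_d + term_b + term_a + pair_ac + pair_bd + anti (a * d) (b * c)

theorem sum_mul_bracket_eq_two_nsmul (h : IsTransposedLeibniz br)
    (two_regular : IsSMulRegular A (2 : ℕ)) (anti : ∀ x y, br x y = -br y x) (a b c d : A) :
    a * c * br b d + b * c * br a d + b * d * br a c + a * d * br b c =
      2 • br (a * b) (c * d) := by
  have term_bd : 2 • (a * c * br b d) = br (a * b) (c * d) + br (b * c) (a * d) := by
    rw [mul_comm (a * c), h.two_nsmul_bracket_mul_mul, mul_comm b a, mul_comm d c, mul_comm d a]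
  have term_ad : 2 • (b * c * br a d) = br (a * b) (c * d) + br (a * c) (b * d) := by
    rw [mul_comm (b * c), h.two_nsmul_bracket_mul_mul, mul_comm d c, mul_comm d b]
  have term_ac : 2 • (b * d * br a c) = br (a * b) (c * d) + br (a * d) (b * c) := by
    rw [mul_comm (b * d), h.two_nsmul_bracket_mul_mul, mul_comm c b]
  have term_bc : 2 • (a * d * br b c) = br (a * b) (c * d) + br (b * d) (a * c) := by
    rw [mul_comm (a * d), h.two_nsmul_bracket_mul_mul, mul_comm b a, mul_comm c a]
  apply two_regular
  linear_combination (norm := module)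
    term_bd + term_ad + term_ac + term_bc + anti (a * d) (b * c) + anti (a * c) (b * d)

end NonUnitalCommRing

end IsTransposedLeibniz

/-- A commutative associative algebra given by a bilinear product, as a non-unital ring. It keeps
the additive structure of the module, so the product `x * y` is `mul x y` by unfolding. -/
abbrev nonUnitalCommRingOfBilinear {R A : Type*} [CommSemiring R] [AddCommGroup A] [Module R A]
    (mul : A →ₗ[R] A →ₗ[R] A) (comm : ∀ x y, mul x y = mul y x)
    (assoc : ∀ x y z, mul (mul x y) z = mul x (mul y z)) : NonUnitalCommRing A where
  mul x y := mul x y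
  left_distrib x := map_add (mul x)
  right_distrib := mul.map_add₂
  zero_mul := mul.map_zero₂
  mul_zero x := map_zero (mul x)
  mul_assoc := assoc
  mul_comm := comm

theorem stmt_3_general {A : Type*} [NonUnitalCommRing A] (two_regular : IsSMulRegular A (2 : ℕ))
    (br : A → A → A) (anti : ∀ x y, br x y = -br y x) (h : IsTransposedLeibniz br)
    (a b c d : A) :
    br (a * b) (c * d) =
      br (a * b) c * d + br (a * b) d * c + a * br b (c * d) + b * br a (c * d)
        - a * c * br b d - b * c * br a d - b * d * br a c - a * d * br b c := by
  linear_combination (norm := module)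
    h.sum_mul_bracket_eq_two_nsmul two_regular anti a b c d
      - h.sum_bracket_mul_eq_three_nsmul two_regular anti a b c d

theorem stmt_3 {K A : Type*} [Field K] [CharZero K] [AddCommGroup A] [Module K A]
    (mul : A →ₗ[K] A →ₗ[K] A) (br : A →ₗ[K] A →ₗ[K] A)
    (hmul_comm : ∀ x y : A, mul x y = mul y x)
    (hmul_assoc : ∀ x y z : A, mul (mul x y) z = mul x (mul y z))
    (hbr_anti : ∀ x y : A, br x y = - br y x)
    (hbr_jacobi : ∀ x y z : A, br (br x y) z + br (br y z) x + br (br z x) y = 0)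
    (htp : ∀ x y z : A, 2 • mul (br x y) z = br (mul x z) y + br x (mul y z)) :
    ∀ a1 a2 a3 a4 : A,
      br (mul a1 a2) (mul a3 a4) =
        mul (br (mul a1 a2) a3) a4 + mul (br (mul a1 a2) a4) a3
        + mul a1 (br a2 (mul a3 a4)) + mul a2 (br a1 (mul a3 a4))
        - mul (mul a1 a3) (br a2 a4) - mul (mul a2 a3) (br a1 a4)
        - mul (mul a2 a4) (br a1 a3) - mul (mul a1 a4) (br a2 a3) := by
  let := nonUnitalCommRingOfBilinear mul hmul_comm hmul_assoc
  exact stmt_3_general ((IsAddTorsionFree.of_isTorsionFree K A).nsmul_right_injective two_ne_zero)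
    (fun x y => br x y) hbr_anti htp
end

section
/- Every transposed Poisson algebra satisfies the second special Gelfand–Dorfman identity: [x₄⋅x₁, x₃⋅x₂] − [x₃⋅x₁, x₄⋅x₂] + [x₃, x₄⋅x₁]⋅x₂ − [x₄, x₃⋅x₂]⋅x₁ − [x₄, x₃⋅x₁]⋅x₂ + [x₃, x₄⋅x₂]⋅x₁ + 2(([x₄,x₃]⋅x₁)⋅x₂) = 0 for all x₁, x₂, x₃, x₄ ∈ A. -/
/-!
The mixed terms `⁅x, y * z⁆ * t` are governed by one exchange identity,
`⁅x, y * z⁆ * t - ⁅y, x * t⁆ * z + ⁅y, x⁆ * (z * t) = ⁅x * t, y * z⁆`: after doubling, the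
transposed Leibniz rule turns each product on the left into two brackets, and antisymmetry leaves
only `2 • ⁅x * t, y * z⁆`. With `x`, `y` fixed, the special identity is the sum of this instance and
the one with `z` and `t` swapped.
-/

section TransposedPoisson

variable {A : Type*} [AddCommGroup A] [CommSemigroup A] [Bracket A A]

theorem bracket_mul_sub_bracket_mul_add (h_two : IsSMulRegular A (2 : ℕ))
    (h_anti : ∀ x y : A, ⁅x, y⁆ = -⁅y, x⁆)
    (h_leibniz : ∀ x y z : A, 2 • (⁅x, y⁆ * z) = ⁅x * z, y⁆ + ⁅x, y * z⁆) (x y z t : A) :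
    ⁅x, y * z⁆ * t - ⁅y, x * t⁆ * z + ⁅y, x⁆ * (z * t) = ⁅x * t, y * z⁆ := by
  apply h_two
  calc
    2 • (⁅x, y * z⁆ * t - ⁅y, x * t⁆ * z + ⁅y, x⁆ * (z * t))
      = (⁅x * t, y * z⁆ + ⁅x, y * z * t⁆) - (⁅y * z, x * t⁆ + ⁅y, x * t * z⁆)
          + (⁅y * (z * t), x⁆ + ⁅y, x * (z * t)⁆) := by
        simp only [smul_add, smul_sub, h_leibniz]
    _ = (⁅x * t, y * z⁆ - ⁅y * z, x * t⁆) + (⁅x, y * (z * t)⁆ + ⁅y * (z * t), x⁆) := by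
        rw [mul_assoc y z t, mul_assoc x t z, mul_comm t z]
        abel
    _ = 2 • ⁅x * t, y * z⁆ := by
        rw [h_anti (y * z), h_anti (y * (z * t))]
        abel

theorem stmt_5_general (h_two : IsSMulRegular A (2 : ℕ))
    (h_anti : ∀ x y : A, ⁅x, y⁆ = -⁅y, x⁆)
    (h_leibniz : ∀ x y z : A, 2 • (⁅x, y⁆ * z) = ⁅x * z, y⁆ + ⁅x, y * z⁆) (x1 x2 x3 x4 : A) :
    ⁅x4 * x1, x3 * x2⁆ - ⁅x3 * x1, x4 * x2⁆
      + ⁅x3, x4 * x1⁆ * x2 - ⁅x4, x3 * x2⁆ * x1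
      - ⁅x4, x3 * x1⁆ * x2 + ⁅x3, x4 * x2⁆ * x1
      + 2 • (⁅x4, x3⁆ * x1 * x2) = 0 := by
  have exchange := bracket_mul_sub_bracket_mul_add h_two h_anti h_leibniz x3 x4
  rw [h_anti (x4 * x1), ← exchange x1 x2, ← exchange x2 x1, mul_comm x2 x1, mul_assoc]
  abel

end TransposedPoisson

theorem stmt_5 {K A : Type*} [Field K] [CharZero K] [AddCommGroup A] [Module K A]
    (mul : A →ₗ[K] A →ₗ[K] A) (br : A →ₗ[K] A →ₗ[K] A)
    (hmul_comm : ∀ x y : A, mul x y = mul y x)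
    (hmul_assoc : ∀ x y z : A, mul (mul x y) z = mul x (mul y z))
    (hbr_anti : ∀ x y : A, br x y = - br y x)
    (hbr_jacobi : ∀ x y z : A, br (br x y) z + br (br y z) x + br (br z x) y = 0)
    (htp : ∀ x y z : A, 2 • mul (br x y) z = br (mul x z) y + br x (mul y z)) :
    ∀ x1 x2 x3 x4 : A,
      br (mul x4 x1) (mul x3 x2) - br (mul x3 x1) (mul x4 x2)
        + mul (br x3 (mul x4 x1)) x2 - mul (br x4 (mul x3 x2)) x1
        - mul (br x4 (mul x3 x1)) x2 + mul (br x3 (mul x4 x2)) x1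
        + 2 • mul (mul (br x4 x3) x1) x2 = 0 := by
  let _ : CommSemigroup A := { mul := (mul · ·), mul_assoc := hmul_assoc, mul_comm := hmul_comm }
  let _ : Bracket A A := ⟨(br · ·)⟩
  have := IsAddTorsionFree.of_isTorsionFree K A
  exact stmt_5_general (nsmul_right_injective two_ne_zero) hbr_anti htp
end

section
/- Let A be a transposed Poisson algebra. Then for all x, y, z ∈ A, [x,y]⋅z = [x,z]⋅y − x⋅[y,z]. -/
/-!
In twice the cyclic sum of `[x, y] ⋅ z`, the transposed Leibniz rule produces six brackets, such as
`[x ⋅ z, y]` and `[y, z ⋅ x]`, which cancel in pairs because the product is commutative and the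
bracket antisymmetric. Cancelling the factor `2` leaves
`[x, y] ⋅ z + [y, z] ⋅ x + [z, x] ⋅ y = 0`. Comparing the rule for `[x, z] ⋅ y` with the one for
`[z, x] ⋅ y` gives `[z, x] ⋅ y = -[x, z] ⋅ y` even when the product is not additive, which turns the
cyclic identity into the claim.
-/

/-- The compatibility condition `2 ([x, y] ⋅ z) = [x ⋅ z, y] + [x, y ⋅ z]` between the product and
the bracket of a transposed Poisson algebra, for arbitrary binary operations `mul` and `br`. -/
def TransposedLeibniz {A : Type*} [AddCommGroup A] (mul br : A → A → A) : Prop :=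
  ∀ x y z : A, 2 • mul (br x y) z = br (mul x z) y + br x (mul y z)

namespace TransposedLeibniz

variable {A : Type*} [AddCommGroup A] {mul br : A → A → A}

theorem two_nsmul_cyclic_sum_eq_zero (htp : TransposedLeibniz mul br)
    (mul_comm : ∀ x y, mul x y = mul y x) (br_anti : ∀ x y, br x y = -br y x) (x y z : A) :
    2 • (mul (br x y) z + mul (br y z) x + mul (br z x) y) = 0 :=
  calc
    2 • (mul (br x y) z + mul (br y z) x + mul (br z x) y)
        = (br (mul x z) y + br x (mul y z)) + (br (mul y x) z + br y (mul z x))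
          + (br (mul z y) x + br z (mul x y)) := by
      rw [nsmul_add, nsmul_add, htp x y z, htp y z x, htp z x y]
    _ = (br (mul x z) y + br x (mul y z)) + (br (mul x y) z - br (mul x z) y)
          + (-br x (mul y z) - br (mul x y) z) := by
      rw [mul_comm y x, mul_comm z x, mul_comm z y, br_anti y (mul x z), br_anti (mul y z) x,
        br_anti z (mul x y), ← sub_eq_add_neg, ← sub_eq_add_neg]
    _ = 0 := by abel

theorem cyclic_sum_eq_zero (htp : TransposedLeibniz mul br)
    (two_regular : IsSMulRegular A (2 : ℕ)) (mul_comm : ∀ x y, mul x y = mul y x)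
    (br_anti : ∀ x y, br x y = -br y x) (x y z : A) :
    mul (br x y) z + mul (br y z) x + mul (br z x) y = 0 :=
  two_regular.right_eq_zero_of_smul
    (htp.two_nsmul_cyclic_sum_eq_zero mul_comm br_anti x y z)

theorem mul_br_swap (htp : TransposedLeibniz mul br) (two_regular : IsSMulRegular A (2 : ℕ))
    (br_anti : ∀ x y, br x y = -br y x) (x y z : A) :
    mul (br y x) z = -mul (br x y) z := by
  refine two_regular ?_
  calc
    2 • mul (br y x) z = br (mul y z) x + br y (mul x z) := htp y x z
    _ = -(br (mul x z) y + br x (mul y z)) := by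
      rw [br_anti (mul y z) x, br_anti y (mul x z), neg_add_rev]
    _ = 2 • -mul (br x y) z := by rw [← htp x y z, smul_neg]

end TransposedLeibniz

theorem stmt_6_general {A : Type*} [AddCommGroup A] {mul br : A → A → A}
    (two_regular : IsSMulRegular A (2 : ℕ)) (mul_comm : ∀ x y, mul x y = mul y x)
    (br_anti : ∀ x y, br x y = -br y x) (htp : TransposedLeibniz mul br) (x y z : A) :
    mul (br x y) z = mul (br x z) y - mul x (br y z) := by
  have cyclic : mul (br x y) z + mul x (br y z) - mul (br x z) y = 0 := by
    rw [mul_comm x (br y z), sub_eq_add_neg, ← htp.mul_br_swap two_regular br_anti x z y]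
    exact htp.cyclic_sum_eq_zero two_regular mul_comm br_anti x y z
  exact eq_sub_of_add_eq (sub_eq_zero.mp cyclic)

theorem stmt_6 {K A : Type*} [Field K] [CharZero K] [AddCommGroup A] [Module K A]
    (mul : A →ₗ[K] A →ₗ[K] A) (br : A →ₗ[K] A →ₗ[K] A)
    (hmul_comm : ∀ x y : A, mul x y = mul y x)
    (hmul_assoc : ∀ x y z : A, mul (mul x y) z = mul x (mul y z))
    (hbr_anti : ∀ x y : A, br x y = - br y x)
    (hbr_jacobi : ∀ x y z : A, br (br x y) z + br (br y z) x + br (br z x) y = 0)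
    (htp : ∀ x y z : A, 2 • mul (br x y) z = br (mul x z) y + br x (mul y z)) :
    ∀ x y z : A, mul (br x y) z = mul (br x z) y - mul x (br y z) := by
  have : IsAddTorsionFree A := .of_isTorsionFree K A
  exact stmt_6_general (nsmul_right_injective two_ne_zero) hmul_comm hbr_anti htp
end

section
/- Let A be a transposed Poisson algebra. Then for all x₁, x₂, x₃, x₄ ∈ A, [x₁,x₄]⋅[x₂,x₃] = [x₁,x₃]⋅[x₂,x₄] − [x₁,[x₃,x₄]]⋅x₂ + x₁⋅[x₂,[x₃,x₄]]. -/
/-!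
Multiplication by a fixed element is a half-derivation of the bracket. Summing this property over
cyclic permutations makes `x ⋅ [y, z]` cyclically sum to zero. For a half-derivation `D` the cyclic
sums `S = ∑ [D [x, y], z]` and `T = ∑ [[x, y], D z]` satisfy `S + T = 0` and `2 S + T = 0`, so
`S = 0`; taking for `D` the multiplication by `h` makes `[h, x] ⋅ [y, z]` cyclically sum to zero
in `x, y, z`. The theorem combines the two cyclic identities: the second one reduces it to the
first one for `x₁`, `x₂` and `[x₃, x₄]`.
-/

/-- `D` is a half-derivation of the bilinear product `br`: `D [x, y] = ([D x, y] + [x, D y]) / 2`,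
with the denominator cleared so that 2 need not be invertible. The transposed Leibniz rule says that
all multiplication operators are half-derivations of the bracket. -/
def IsHalfDerivation {R A : Type*} [CommSemiring R] [AddCommGroup A] [Module R A]
    (br : A →ₗ[R] A →ₗ[R] A) (D : A →ₗ[R] A) : Prop :=
  ∀ x y : A, 2 • D (br x y) = br (D x) y + br x (D y)

section CyclicIdentities

variable {R A : Type*} [CommSemiring R] [AddCommGroup A] [Module R A]
  {mul br : A →ₗ[R] A →ₗ[R] A}

theorem IsHalfDerivation.bracket_map_bracket_cyclic {D : A →ₗ[R] A} (hD : IsHalfDerivation br D)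
    (hbr_jacobi : ∀ x y z : A, br (br x y) z + br (br y z) x + br (br z x) y = 0) (x y z : A) :
    br (D (br x y)) z + br (D (br y z)) x + br (D (br z x)) y = 0 := by
  set S := br (D (br x y)) z + br (D (br y z)) x + br (D (br z x)) y with hS
  set T := br (br x y) (D z) + br (br y z) (D x) + br (br z x) (D y) with hT
  have add_eq_zero : S + T = 0 := calc
    S + T = 2 • D (br (br x y) z + br (br y z) x + br (br z x) y) := by
      simp only [map_add, smul_add, hD (br _ _), hS, hT]
      abel
    _ = 0 := by rw [hbr_jacobi, map_zero, smul_zero]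
  have two_smul_bracket (a b c : A) :
      2 • br (D (br a b)) c = br (br (D a) b) c + br (br a (D b)) c := by
    rw [← LinearMap.smul_apply, ← map_nsmul, hD a b, map_add, LinearMap.add_apply]
  have two_smul_add_eq_zero : 2 • S + T = 0 := calc
    2 • S + T =
        (br (br (D x) y) z + br (br y z) (D x) + br (br z (D x)) y) +
        (br (br (D y) z) x + br (br z x) (D y) + br (br x (D y)) z) +
        (br (br (D z) x) y + br (br x y) (D z) + br (br y (D z)) x) := by
      simp only [smul_add, two_smul_bracket, hS, hT]
      abel
    _ = 0 := by simp only [hbr_jacobi, add_zero]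
  calc
    S = (2 • S + T) - (S + T) := by abel
    _ = 0 := by rw [two_smul_add_eq_zero, add_eq_zero, sub_zero]

theorem mul_bracket_cyclic (h2 : IsSMulRegular A (2 : ℕ))
    (hmul_comm : ∀ x y : A, mul x y = mul y x) (hbr_anti : ∀ x y : A, br x y = -br y x)
    (htp : ∀ x y z : A, 2 • mul (br x y) z = br (mul x z) y + br x (mul y z)) (x y z : A) :
    mul x (br y z) + mul y (br z x) + mul z (br x y) = 0 := by
  have two_smul_mul (a b c : A) : 2 • mul a (br b c) = br b (mul c a) - br c (mul a b) := by
    rw [hmul_comm a, htp, hbr_anti (mul b a) c, hmul_comm b a]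
    abel
  refine h2.right_eq_zero_of_smul ?_
  simp only [smul_add, two_smul_mul]
  abel

theorem bracket_mul_bracket_cyclic (h2 : IsSMulRegular A (2 : ℕ))
    (hmul_comm : ∀ x y : A, mul x y = mul y x) (hbr_anti : ∀ x y : A, br x y = -br y x)
    (hbr_jacobi : ∀ x y z : A, br (br x y) z + br (br y z) x + br (br z x) y = 0)
    (htp : ∀ x y z : A, 2 • mul (br x y) z = br (mul x z) y + br x (mul y z)) (h x y z : A) :
    mul (br h x) (br y z) + mul (br h y) (br z x) + mul (br h z) (br x y) = 0 := by
  have half_derivation : IsHalfDerivation br (mul h) := fun a b => by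
    rw [hmul_comm h, hmul_comm h, hmul_comm h, htp]
  refine h2.right_eq_zero_of_smul ?_
  calc
    2 • (mul (br h x) (br y z) + mul (br h y) (br z x) + mul (br h z) (br x y)) =
        (br (mul h (br y z)) x + br (mul h (br z x)) y + br (mul h (br x y)) z) +
        br h (mul x (br y z) + mul y (br z x) + mul z (br x y)) := by
      simp only [smul_add, htp h, map_add]
      abel
    _ = 0 := by
      rw [half_derivation.bracket_map_bracket_cyclic hbr_jacobi,
        mul_bracket_cyclic h2 hmul_comm hbr_anti htp, map_zero, add_zero]

end CyclicIdentities

theorem stmt_8_general {R A : Type*} [CommSemiring R] [AddCommGroup A] [Module R A]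
    (h2 : IsSMulRegular A (2 : ℕ)) (mul : A →ₗ[R] A →ₗ[R] A) (br : A →ₗ[R] A →ₗ[R] A)
    (hmul_comm : ∀ x y : A, mul x y = mul y x)
    (hbr_anti : ∀ x y : A, br x y = -br y x)
    (hbr_jacobi : ∀ x y z : A, br (br x y) z + br (br y z) x + br (br z x) y = 0)
    (htp : ∀ x y z : A, 2 • mul (br x y) z = br (mul x z) y + br x (mul y z))
    (x1 x2 x3 x4 : A) :
    mul (br x1 x4) (br x2 x3) =
      mul (br x1 x3) (br x2 x4) - mul (br x1 (br x3 x4)) x2 + mul x1 (br x2 (br x3 x4)) := by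
  have bracket_products :
      mul (br x1 x4) (br x2 x3) = mul (br x1 x3) (br x2 x4) - mul (br x3 x4) (br x1 x2) := by
    have cyclic := bracket_mul_bracket_cyclic h2 hmul_comm hbr_anti hbr_jacobi htp x1 x2 x3 x4
    rw [hbr_anti x4 x2, map_neg, hmul_comm (br x1 x2)] at cyclic
    rw [eq_neg_of_add_eq_zero_right cyclic]
    abel
  have mul_double_brackets :
      mul (br x3 x4) (br x1 x2) = mul (br x1 (br x3 x4)) x2 - mul x1 (br x2 (br x3 x4)) := by
    have cyclic := mul_bracket_cyclic h2 hmul_comm hbr_anti htp x1 x2 (br x3 x4)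
    rw [hbr_anti (br x3 x4) x1, map_neg, hmul_comm x2] at cyclic
    rw [eq_neg_of_add_eq_zero_right cyclic]
    abel
  rw [bracket_products, mul_double_brackets]
  abel

theorem stmt_8 {K A : Type*} [Field K] [CharZero K] [AddCommGroup A] [Module K A]
    (mul : A →ₗ[K] A →ₗ[K] A) (br : A →ₗ[K] A →ₗ[K] A)
    (hmul_comm : ∀ x y : A, mul x y = mul y x)
    (hmul_assoc : ∀ x y z : A, mul (mul x y) z = mul x (mul y z))
    (hbr_anti : ∀ x y : A, br x y = - br y x)
    (hbr_jacobi : ∀ x y z : A, br (br x y) z + br (br y z) x + br (br z x) y = 0)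
    (htp : ∀ x y z : A, 2 • mul (br x y) z = br (mul x z) y + br x (mul y z)) :
    ∀ x1 x2 x3 x4 : A,
      mul (br x1 x4) (br x2 x3) =
        mul (br x1 x3) (br x2 x4) - mul (br x1 (br x3 x4)) x2 + mul x1 (br x2 (br x3 x4)) := by
  have : IsAddTorsionFree A := .of_isTorsionFree K A
  exact stmt_8_general (nsmul_right_injective two_ne_zero) mul br hmul_comm hbr_anti hbr_jacobi htp
end

section
/- Let A be a transposed Poisson algebra. Then for all x₁, x₂, x₃, x₄ ∈ A, [x₁, x₃⋅x₄]⋅x₂ = [x₁, x₂⋅(x₃⋅x₄)] + 2(x₁⋅([x₂,x₄]⋅x₃)) − x₁⋅[x₂, x₃⋅x₄] − x₁⋅(x₂⋅[x₃,x₄]). -/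
/-!
Write `X = 2 • (br x y * (z * w))`. The transposed Leibniz rule with multiplier `z * w` expands `X`
as the sum of `br (x * z * w) y` and `br x (y * z * w)`. Applying it first for `z` and then for `w`
expands `2 • X` as the same two terms plus the crossed sum
`br (x * z) (y * w) + br (x * w) (y * z)`, so `X` also equals the crossed sum. After doubling the
identity to be proved, each of its terms other than `br a (b * (c * d))` becomes, by the rule or by
the crossed expansion, a sum of brackets of products, and everything cancels.
-/

section TransposedLeibniz

variable {A : Type*} [NonUnitalCommRing A] {br : A → A → A}

theorem two_nsmul_bracket_mul_mul
    (leibniz : ∀ x y z : A, 2 • (br x y * z) = br (x * z) y + br x (y * z)) (x y z w : A) :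
    2 • (br x y * (z * w)) = br (x * z) (y * w) + br (x * w) (y * z) := by
  have outer : 2 • (br x y * (z * w)) = br (x * (z * w)) y + br x (y * (z * w)) :=
    leibniz x y (z * w)
  have iterated : 2 • (2 • (br x y * (z * w))) =
      (br (x * (z * w)) y + br (x * z) (y * w)) + (br (x * w) (y * z) + br x (y * (z * w))) :=
    calc 2 • (2 • (br x y * (z * w)))
        = 2 • (br (x * z) y * w) + 2 • (br x (y * z) * w) := by
          rw [← mul_assoc, ← smul_mul_assoc, leibniz, add_mul, smul_add]
      _ = _ := by rw [leibniz, leibniz, mul_assoc x, mul_assoc y]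
  linear_combination (norm := abel) iterated - outer

theorem stmt_11_general (two_regular : IsSMulRegular A 2)
    (leibniz : ∀ x y z : A, 2 • (br x y * z) = br (x * z) y + br x (y * z)) (a b c d : A) :
    br a (c * d) * b =
      br a (b * (c * d)) + 2 • (a * (br b d * c)) - a * br b (c * d) - a * (b * br c d) := by
  have crossed := two_nsmul_bracket_mul_mul leibniz
  have two_bracket_a_cd : 2 • (br a (c * d) * b) = br (a * b) (c * d) + br a (b * (c * d)) := by
    rw [leibniz, mul_comm (c * d)]
  have two_bracket_b_cd : 2 • (a * br b (c * d)) = br (a * b) (c * d) + br b (a * (c * d)) := by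
    rw [mul_comm, leibniz, mul_comm b, mul_comm (c * d)]
  have two_bracket_bd : 2 • (a * (br b d * c)) = br (a * (b * c)) d + br b (a * (c * d)) := by
    rw [mul_left_comm, leibniz, mul_left_comm b, mul_comm d, mul_assoc]
  have two_bracket_bd_crossed :
      2 • (a * (br b d * c)) = br (a * b) (c * d) + br (b * c) (a * d) := by
    rw [mul_left_comm, crossed, mul_comm b a, mul_comm d c, mul_comm d a]
  have two_bracket_cd_crossed :
      2 • (a * (b * br c d)) = br (a * c) (b * d) + br (b * c) (a * d) := by
    rw [← mul_assoc, mul_comm, crossed, mul_comm c a, mul_comm d b, mul_comm c b, mul_comm d a]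
  have ad_expansions :
      br (a * (b * c)) d + br a (b * (c * d)) = br (a * b) (c * d) + br (a * c) (b * d) := by
    rw [mul_comm c d, mul_comm b d, ← crossed, leibniz, mul_left_comm b, mul_comm d]
  refine two_regular (?_ : 2 • _ = 2 • _)
  linear_combination (norm := abel) two_bracket_a_cd + two_bracket_b_cd - two_bracket_bd
    - two_bracket_bd_crossed + two_bracket_cd_crossed - ad_expansions

end TransposedLeibniz

/-- The non-unital commutative ring whose product is the commutative associative bilinear map
`mul`; it turns an algebra given by its structure map into one with a multiplication `*`. -/
abbrev nonUnitalCommRingOfBilin {R A : Type*} [CommSemiring R] [AddCommGroup A] [Module R A]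
    (mul : A →ₗ[R] A →ₗ[R] A) (mul_comm : ∀ x y : A, mul x y = mul y x)
    (mul_assoc : ∀ x y z : A, mul (mul x y) z = mul x (mul y z)) : NonUnitalCommRing A where
  mul x y := mul x y
  left_distrib x := map_add (mul x)
  right_distrib := mul.map_add₂
  zero_mul := mul.map_zero₂
  mul_zero x := map_zero (mul x)
  mul_assoc := mul_assoc
  mul_comm := mul_comm

theorem stmt_11 {K A : Type*} [Field K] [CharZero K] [AddCommGroup A] [Module K A]
    (mul : A →ₗ[K] A →ₗ[K] A) (br : A →ₗ[K] A →ₗ[K] A)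
    (hmul_comm : ∀ x y : A, mul x y = mul y x)
    (hmul_assoc : ∀ x y z : A, mul (mul x y) z = mul x (mul y z))
    (hbr_anti : ∀ x y : A, br x y = - br y x)
    (hbr_jacobi : ∀ x y z : A, br (br x y) z + br (br y z) x + br (br z x) y = 0)
    (htp : ∀ x y z : A, 2 • mul (br x y) z = br (mul x z) y + br x (mul y z)) :
    ∀ x1 x2 x3 x4 : A,
      mul (br x1 (mul x3 x4)) x2 =
        br x1 (mul x2 (mul x3 x4)) + 2 • mul x1 (mul (br x2 x4) x3)
        - mul x1 (br x2 (mul x3 x4)) - mul x1 (mul x2 (br x3 x4)) := by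
  let _ := nonUnitalCommRingOfBilin mul hmul_comm hmul_assoc
  have : IsAddTorsionFree A := .of_isTorsionFree K A
  exact stmt_11_general (br := fun x y => br x y) (nsmul_right_injective two_ne_zero) htp
end

section
/- Let A be a transposed Poisson algebra. Then for all x₁, x₂, x₃, x₄ ∈ A, [[x₁,x₃], x₂⋅x₄] = [[x₁, x₃⋅x₄], x₂] − 2([x₁,x₃]⋅[x₂,x₄]) + 2([x₁, [x₃,x₄]]⋅x₂) + [x₁, [x₂,x₄]⋅x₃] + [x₁, [x₂, x₃⋅x₄]] − [x₁, x₂⋅[x₃,x₄]] + 2(x₁⋅[[x₂,x₄], x₃]). -/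
/-!
The transposed Leibniz rule `2 [x, y] ⋅ z = [x ⋅ z, y] + [x, y ⋅ z]` expands `4 [x, y] ⋅ [z, w]`
into double brackets by distributing `[z, w]` over `[x, y]`. Since `⋅` is commutative, one may
equally well distribute `[x, y]` over `[z, w]`. By the Jacobi identity, the difference of the two
expansions is a four-term relation between brackets of the form `[a ⋅ b, [c, d]]`. The rewriting
rule is this relation, once its own products of brackets are expanded.
-/

section

variable {R A : Type*} [CommRing R] [AddCommGroup A] [Module R A] {mul br : A →ₗ[R] A →ₗ[R] A}

theorem bracket_bracket_sub_bracket_bracket_swap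
    (br_anti : ∀ x y : A, br x y = -br y x)
    (jacobi : ∀ x y z : A, br (br x y) z + br (br y z) x + br (br z x) y = 0) (x y z : A) :
    br (br x y) z - br (br x z) y = br x (br y z) := by
  have swap_inner : br (br z x) y = -br (br x z) y := by
    rw [br_anti z x, map_neg, LinearMap.neg_apply]
  linear_combination (norm := module) jacobi x y z - br_anti x (br y z) - swap_inner

theorem four_nsmul_mul_bracket_bracket
    (mul_comm : ∀ x y : A, mul x y = mul y x)
    (transposed_leibniz : ∀ x y z : A, 2 • mul (br x y) z = br (mul x z) y + br x (mul y z))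
    (x y z w : A) :
    4 • mul (br x y) (br z w) =
      br (br (mul z x) w + br z (mul w x)) y + br x (br (mul z y) w + br z (mul w y)) :=
  calc
    4 • mul (br x y) (br z w) = 2 • (2 • mul (br x y) (br z w)) := by module
    _ = br (2 • mul (br z w) x) y + br x (2 • mul (br z w) y) := by
      rw [transposed_leibniz, mul_comm x, mul_comm y, smul_add, map_nsmul br, LinearMap.smul_apply,
        map_nsmul]
    _ = _ := by rw [transposed_leibniz z w x, transposed_leibniz z w y]

theorem bracket_bracket_mul
    (mul_comm : ∀ x y : A, mul x y = mul y x)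
    (br_anti : ∀ x y : A, br x y = -br y x)
    (jacobi : ∀ x y z : A, br (br x y) z + br (br y z) x + br (br z x) y = 0)
    (transposed_leibniz : ∀ x y z : A, 2 • mul (br x y) z = br (mul x z) y + br x (mul y z))
    (x y z w : A) :
    br (br x z) (mul y w) =
      br (br x y) (mul z w) + br (mul x y) (br z w) + br (br y w) (mul x z) := by
  have expansions_eq :
      br (br (mul x y) z + br y (mul x z)) w + br x (br (mul y w) z + br y (mul z w)) =
        br (br (mul x y) w + br x (mul y w)) z + br y (br (mul x z) w + br x (mul z w)) := by
    have expand := four_nsmul_mul_bracket_bracket mul_comm transposed_leibniz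
    have h := (expand x w y z).symm.trans (mul_comm (br x w) (br y z) ▸ expand y z x w)
    rwa [mul_comm y x, mul_comm z x, mul_comm w y, mul_comm w z] at h
  have jacobi_swap := bracket_bracket_sub_bracket_bracket_swap br_anti jacobi
  have xy_terms : br (br (mul x y) z) w - br (br (mul x y) w) z = br (mul x y) (br z w) :=
    jacobi_swap (mul x y) z w
  have xz_terms : br (br y (mul x z)) w - br y (br (mul x z) w) = br (br y w) (mul x z) := by
    rw [← jacobi_swap, sub_sub_cancel]
  have yw_terms : br (br x (mul y w)) z - br x (br (mul y w) z) = br (br x z) (mul y w) := by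
    rw [← jacobi_swap, sub_sub_cancel]
  have zw_terms : br x (br y (mul z w)) - br y (br x (mul z w)) = br (br x y) (mul z w) := by
    rw [← jacobi_swap, br_anti y, sub_neg_eq_add, sub_add_cancel]
  simp only [map_add, LinearMap.add_apply] at expansions_eq
  linear_combination (norm := module)
    -expansions_eq + xy_terms + xz_terms - yw_terms + zw_terms

theorem stmt_13_general (mul_comm : ∀ x y : A, mul x y = mul y x)
    (br_anti : ∀ x y : A, br x y = -br y x)
    (jacobi : ∀ x y z : A, br (br x y) z + br (br y z) x + br (br z x) y = 0)
    (transposed_leibniz : ∀ x y z : A, 2 • mul (br x y) z = br (mul x z) y + br x (mul y z))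
    (x y z w : A) :
    br (br x z) (mul y w) =
      br (br x (mul z w)) y - 2 • mul (br x z) (br y w)
      + 2 • mul (br x (br z w)) y
      + br x (mul (br y w) z) + br x (br y (mul z w))
      - br x (mul y (br z w)) + 2 • mul x (br (br y w) z) := by
  have expand_xz_yw : 2 • mul (br x z) (br y w) =
      br (mul x (br y w)) z + br x (mul (br y w) z) := by
    rw [transposed_leibniz, mul_comm z]
  have expand_xzw_y : 2 • mul (br x (br z w)) y =
      br (mul x y) (br z w) + br x (mul y (br z w)) := by
    rw [transposed_leibniz, mul_comm (br z w)]
  have expand_x_ywz : 2 • mul x (br (br y w) z) =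
      br (mul x (br y w)) z + br (br y w) (mul x z) := by
    rw [mul_comm x, transposed_leibniz, mul_comm (br y w), mul_comm z]
  have collect_jacobi : br (br x (mul z w)) y + br x (br y (mul z w)) = br (br x y) (mul z w) := by
    rw [← bracket_bracket_sub_bracket_bracket_swap br_anti jacobi, add_sub_cancel]
  rw [bracket_bracket_mul mul_comm br_anti jacobi transposed_leibniz, expand_xz_yw, expand_xzw_y,
    expand_x_ywz, ← collect_jacobi]
  abel

end

theorem stmt_13 {K A : Type*} [Field K] [CharZero K] [AddCommGroup A] [Module K A]
    (mul : A →ₗ[K] A →ₗ[K] A) (br : A →ₗ[K] A →ₗ[K] A)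
    (hmul_comm : ∀ x y : A, mul x y = mul y x)
    (hmul_assoc : ∀ x y z : A, mul (mul x y) z = mul x (mul y z))
    (hbr_anti : ∀ x y : A, br x y = - br y x)
    (hbr_jacobi : ∀ x y z : A, br (br x y) z + br (br y z) x + br (br z x) y = 0)
    (htp : ∀ x y z : A, 2 • mul (br x y) z = br (mul x z) y + br x (mul y z)) :
    ∀ x1 x2 x3 x4 : A,
      br (br x1 x3) (mul x2 x4) =
        br (br x1 (mul x3 x4)) x2 - 2 • mul (br x1 x3) (br x2 x4)
        + 2 • mul (br x1 (br x3 x4)) x2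
        + br x1 (mul (br x2 x4) x3) + br x1 (br x2 (mul x3 x4))
        - br x1 (mul x2 (br x3 x4)) + 2 • mul x1 (br (br x2 x4) x3) :=
  stmt_13_general hmul_comm hbr_anti hbr_jacobi htp
end

section
/- Let A be a transposed Poisson algebra. Then for all a₁, a₂, a₃, a₄ ∈ A, [a₁⋅a₃, a₂⋅a₄] − [a₁⋅a₄, a₂⋅a₃] = −2(a₁⋅a₂⋅[a₃,a₄]) − 2(a₁⋅[a₂⋅a₄, a₃]) + 2(a₁⋅[a₂⋅a₃, a₄]), where products of three factors are unambiguous by associativity and commutativity of ⋅. -/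
/-!
The transposed Leibniz rule moves the outer factor of each term on the right-hand side into a
bracket. Writing `t = a1 ⋅ a2 ⋅ a4`, the brackets containing a product of three factors are
`[a1 ⋅ a2 ⋅ a3, a4]`, which occurs with both signs, and `[t, a3]` and `[a3, t]`, which cancel by
antisymmetry. The two brackets of products of two factors remain.
-/

theorem two_nsmul_mul_bracket_s16 {A : Type*} [AddMonoid A] {mul br : A → A → A}
    (mul_comm : ∀ x y, mul x y = mul y x)
    (transposed_leibniz : ∀ x y z, 2 • mul (br x y) z = br (mul x z) y + br x (mul y z))
    (x y z : A) :
    2 • mul x (br y z) = br (mul x y) z + br y (mul x z) := by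
  rw [mul_comm x (br y z), mul_comm x y, mul_comm x z, transposed_leibniz]

theorem stmt_16_general {A : Type*} [AddCommGroup A] {mul br : A → A → A}
    (mul_comm : ∀ x y, mul x y = mul y x)
    (mul_assoc : ∀ x y z, mul (mul x y) z = mul x (mul y z))
    (bracket_anti : ∀ x y, br x y = -br y x)
    (transposed_leibniz : ∀ x y z, 2 • mul (br x y) z = br (mul x z) y + br x (mul y z))
    (a1 a2 a3 a4 : A) :
    br (mul a1 a3) (mul a2 a4) - br (mul a1 a4) (mul a2 a3) =
      - (2 • mul (mul a1 a2) (br a3 a4)) - 2 • mul a1 (br (mul a2 a4) a3)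
      + 2 • mul a1 (br (mul a2 a3) a4) := by
  have leibniz := two_nsmul_mul_bracket_s16 mul_comm transposed_leibniz
  have expand_left : 2 • mul (mul a1 a2) (br a3 a4) =
      br (mul a1 (mul a2 a3)) a4 + br a3 (mul a1 (mul a2 a4)) := by
    rw [leibniz, mul_assoc, mul_assoc]
  rw [expand_left, leibniz a1 (mul a2 a4) a3, leibniz a1 (mul a2 a3) a4,
    bracket_anti a3 (mul a1 (mul a2 a4)), bracket_anti (mul a2 a4) (mul a1 a3),
    bracket_anti (mul a2 a3) (mul a1 a4)]
  abel

theorem stmt_16 {K A : Type*} [Field K] [CharZero K] [AddCommGroup A] [Module K A]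
    (mul : A →ₗ[K] A →ₗ[K] A) (br : A →ₗ[K] A →ₗ[K] A)
    (hmul_comm : ∀ x y : A, mul x y = mul y x)
    (hmul_assoc : ∀ x y z : A, mul (mul x y) z = mul x (mul y z))
    (hbr_anti : ∀ x y : A, br x y = - br y x)
    (hbr_jacobi : ∀ x y z : A, br (br x y) z + br (br y z) x + br (br z x) y = 0)
    (htp : ∀ x y z : A, 2 • mul (br x y) z = br (mul x z) y + br x (mul y z)) :
    ∀ a1 a2 a3 a4 : A,
      br (mul a1 a3) (mul a2 a4) - br (mul a1 a4) (mul a2 a3) =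
        - (2 • mul (mul a1 a2) (br a3 a4)) - 2 • mul a1 (br (mul a2 a4) a3)
        + 2 • mul a1 (br (mul a2 a3) a4) :=
  stmt_16_general hmul_comm hmul_assoc hbr_anti htp
end
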